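/- Proposition (maximal regret scenario for the robust set covering problem): for every covering K ∈ Λ and every scenario c, the regret of K in c is at most the regret of K in the induced scenario s(K); that is, Σ_{j∈K} c j − min_{K'∈Λ} Σ_{j∈K'} c j ≤ Σ_{j∈K} u j − min_{K'∈Λ} ( Σ_{j∈K'∩K} u j + Σ_{j∈K'\K} l j ). -/

import Mathlib

open Finset

/-!
Columns shared by `K` and a competing covering `L` cancel in the difference of their costs, so the
gap between `K` and `L` is the cost of `K \ L` minus that of `L \ K`. The scenario induced by `K`
maximizes the first term and minimizes the second, for every `L` at once, and the regret of `K` is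
the largest of these gaps.
-/

section Regret

variable {J G : Type*} [AddCommGroup G]

/-- The regret of choosing `K` under the costs `c`: the excess of its cost over the optimum on the
family `𝓕` of feasible sets. The infimum is meaningful only when `𝓕` is nonempty and the costs of
its members are bounded below. -/
def regret [InfSet G] (𝓕 : Set (Finset J)) (c : J → G) (K : Finset J) : G :=
  ∑ j ∈ K, c j - sInf {v | ∃ L ∈ 𝓕, v = ∑ j ∈ L, c j}

/-- The scenario `s(K)` induced by `K` for the cost intervals `[l j, u j]`: the columns of `K`
take their upper cost and all other columns their lower cost. -/
def inducedScenario [DecidableEq J] (l u : J → G) (K : Finset J) : J → G :=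
  K.piecewise u l

theorem sum_inducedScenario [DecidableEq J] (l u : J → G) (K L : Finset J) :
    ∑ j ∈ L, inducedScenario l u K j = ∑ j ∈ L ∩ K, u j + ∑ j ∈ L \ K, l j :=
  sum_piecewise L K u l

theorem regret_inducedScenario [InfSet G] [DecidableEq J] (𝓕 : Set (Finset J)) (l u : J → G)
    (K : Finset J) :
    regret 𝓕 (inducedScenario l u K) K =
      ∑ j ∈ K, u j - sInf {v | ∃ L ∈ 𝓕, v = ∑ j ∈ L ∩ K, u j + ∑ j ∈ L \ K, l j} := by
  simp only [regret, sum_inducedScenario, inter_self, Finset.sdiff_self, sum_empty, add_zero]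

theorem sum_sub_sum_le_sum_sub_sum [PartialOrder G] [IsOrderedAddMonoid G]
    {c s : J → G} {K : Finset J} (hK : ∀ j ∈ K, c j ≤ s j) (hKc : ∀ j ∉ K, s j ≤ c j)
    (L : Finset J) :
    ∑ j ∈ K, c j - ∑ j ∈ L, c j ≤ ∑ j ∈ K, s j - ∑ j ∈ L, s j := by
  classical
  calc ∑ j ∈ K, c j - ∑ j ∈ L, c j
      = ∑ j ∈ K \ L, c j - ∑ j ∈ L \ K, c j := sum_sdiff_sub_sum_sdiff.symm
    _ ≤ ∑ j ∈ K \ L, s j - ∑ j ∈ L \ K, s j :=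
        sub_le_sub (sum_le_sum fun j hj ↦ hK j (mem_sdiff.1 hj).1)
          (sum_le_sum fun j hj ↦ hKc j (mem_sdiff.1 hj).2)
    _ = ∑ j ∈ K, s j - ∑ j ∈ L, s j := sum_sdiff_sub_sum_sdiff

theorem bddBelow_sum_of_finite [SemilatticeInf G] {𝓕 : Set (Finset J)} (h𝓕 : 𝓕.Finite) (c : J → G) :
    BddBelow {v | ∃ L ∈ 𝓕, v = ∑ j ∈ L, c j} := by
  refine (h𝓕.image fun L ↦ ∑ j ∈ L, c j).bddBelow.mono ?_
  rintro _ ⟨L, hL, rfl⟩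
  exact Set.mem_image_of_mem _ hL

variable [ConditionallyCompleteLattice G] [IsOrderedAddMonoid G]

theorem regret_le_regret {𝓕 : Set (Finset J)} (h𝓕 : 𝓕.Nonempty) {c s : J → G} {K : Finset J}
    (hbdd : BddBelow {v | ∃ L ∈ 𝓕, v = ∑ j ∈ L, s j})
    (hK : ∀ j ∈ K, c j ≤ s j) (hKc : ∀ j ∉ K, s j ≤ c j) :
    regret 𝓕 c K ≤ regret 𝓕 s K := by
  obtain ⟨L₀, hL₀⟩ := h𝓕
  refine sub_le_comm.1 (le_csInf ⟨_, L₀, hL₀, rfl⟩ ?_)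
  rintro _ ⟨L, hL, rfl⟩
  refine sub_le_comm.1 ?_
  calc ∑ j ∈ K, c j - ∑ j ∈ L, c j
      ≤ ∑ j ∈ K, s j - ∑ j ∈ L, s j := sum_sub_sum_le_sum_sub_sum hK hKc L
    _ ≤ regret 𝓕 s K := sub_le_sub_left (csInf_le hbdd ⟨L, hL, rfl⟩) _

theorem rsc_regret_le_regret_induced_scenario_general [DecidableEq J]
    {𝓕 : Set (Finset J)} (h𝓕 : 𝓕.Nonempty) {l u c : J → G} (hc : c ∈ Set.Icc l u) (K : Finset J)
    (hbdd : BddBelow {v | ∃ L ∈ 𝓕, v = ∑ j ∈ L, inducedScenario l u K j}) :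
    regret 𝓕 c K ≤ regret 𝓕 (inducedScenario l u K) K :=
  regret_le_regret h𝓕 hbdd
    (fun j hj ↦ (hc.2 j).trans_eq (K.piecewise_eq_of_mem u l hj).symm)
    (fun j hj ↦ (K.piecewise_eq_of_notMem u l hj).trans_le (hc.1 j))

end Regret

/-- maximal regret scenario for the robust set covering problem: for every
covering `K ∈ Λ` and every scenario `c`, the regret of `K` in `c` is at most the regret of `K`
in the scenario `s(K)` induced by `K` (cost `u` on columns of `K`, cost `l` elsewhere). -/
theorem rsc_regret_le_regret_induced_scenario
    {I J : Type*} [Fintype I] [Fintype J] [DecidableEq J]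
    (O : I → J → ℕ) (hO : ∀ i j, O i j = 0 ∨ O i j = 1)
    (l u : J → ℕ) (hlu : ∀ j, l j ≤ u j)
    (Λ : Set (Finset J))
    (hΛ : Λ = {K : Finset J | ∀ i, ∃ j ∈ K, O i j = 1})
    (hΛne : Λ.Nonempty)
    (K : Finset J) (hK : K ∈ Λ)
    (c : J → ℝ) (hc : ∀ j, (l j : ℝ) ≤ c j ∧ c j ≤ u j) :
    (∑ j ∈ K, c j) - sInf {v : ℝ | ∃ K' ∈ Λ, v = ∑ j ∈ K', c j} ≤
      (∑ j ∈ K, (u j : ℝ)) -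
        sInf {v : ℝ | ∃ K' ∈ Λ,
          v = (∑ j ∈ K' ∩ K, (u j : ℝ)) + ∑ j ∈ K' \ K, (l j : ℝ)} := by
  rw [← regret_inducedScenario Λ (fun j ↦ (l j : ℝ))]
  exact rsc_regret_le_regret_induced_scenario_general hΛne
    ⟨fun j ↦ (hc j).1, fun j ↦ (hc j).2⟩ K (bddBelow_sum_of_finite Λ.toFinite _)
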